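/- Fix integers m ≥ 2 and n, i with 1 ≤ i < n. For x chosen uniformly from Z_m^n, E[f_{m,n}(x_{[i+1,n]})] = n(n-i)(m + 1/m - 2) - n/m + 1/(m-1) - 1/((m-1)m^(n-i)) + i - 1/m^(n-i). -/

import Mathlib

open Finset

/-- The (0-indexed, inclusive) segment `x_i,…,x_j` is alternating, i.e. of the
form `abab…` : adjacent symbols differ and the segment has period 2. -/
def IsAltOn {m : ℕ} (x : ℕ → Fin m) (i j : ℕ) : Prop :=
  (∀ k ∈ Finset.Ico i j, x k ≠ x (k + 1)) ∧ ∀ k ∈ Finset.Ico i (j - 1), x k = x (k + 2)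

instance {m : ℕ} (x : ℕ → Fin m) (i j : ℕ) : Decidable (IsAltOn x i j) :=
  inferInstanceAs (Decidable (_ ∧ _))

/-- The set of (0-indexed, inclusive) index pairs of maximal alternating segments
of the word `x_0,…,x_{n-1}`. -/
def altSegs {m : ℕ} (n : ℕ) (x : ℕ → Fin m) : Finset (ℕ × ℕ) :=
  (Finset.range n ×ˢ Finset.range n).filter (fun p => p.1 ≤ p.2 ∧ IsAltOn x p.1 p.2 ∧
    (p.1 = 0 ∨ ¬ IsAltOn x (p.1 - 1) p.2) ∧ (p.2 = n - 1 ∨ ¬ IsAltOn x p.1 (p.2 + 1)))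

/-- `a(x)` : the number of maximal alternating segments of `x_0,…,x_{n-1}`. -/
def aCount {m : ℕ} (n : ℕ) (x : ℕ → Fin m) : ℕ := (altSegs n x).card

/-- `∑ s_i` : the sum of the lengths of the maximal alternating segments. -/
def sumLen {m : ℕ} (n : ℕ) (x : ℕ → Fin m) : ℕ := ∑ p ∈ altSegs n x, (p.2 - p.1 + 1)

/-- `∑ s_i²` : the sum of the squares of the lengths of the maximal alternating segments. -/
def sumLenSq {m : ℕ} (n : ℕ) (x : ℕ → Fin m) : ℕ := ∑ p ∈ altSegs n x, (p.2 - p.1 + 1) ^ 2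

/-- `ρ(x)` : the number of runs of the word `x_0,…,x_{n-1}`. -/
def rho {m : ℕ} (n : ℕ) (x : ℕ → Fin m) : ℕ :=
  1 + ((Finset.range (n - 1)).filter (fun i => x i ≠ x (i + 1))).card

/-- `h(x)` : the length of the first maximal alternating segment of `x_0,…,x_{n-1}`. -/
def headAlt {m : ℕ} (n : ℕ) (x : ℕ → Fin m) : ℕ :=
  ((Finset.range n).filter (fun j => IsAltOn x 0 j)).card

/-- `t(x)` : the length of the last maximal alternating segment of `x_0,…,x_{n-1}`. -/
def tailAlt {m : ℕ} (n : ℕ) (x : ℕ → Fin m) : ℕ :=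
  ((Finset.range n).filter (fun j => IsAltOn x (n - 1 - j) (n - 1))).card

/-- Extend a word of length `n` to a function `ℕ → Fin m` (junk value `0` beyond `n`). -/
def extWord {m : ℕ} (n : ℕ) (hm : 0 < m) (y : Fin n → Fin m) : ℕ → Fin m :=
  fun i => if h : i < n then y ⟨i, h⟩ else ⟨0, hm⟩

/-- The FLL ball of radius 1 around `x` : all words `y` of length `n` sharing with `x`
a common subsequence of length `n - 1` (equivalently, `d_l(x,y) ≤ 1`). -/
def L1ball {m : ℕ} (n : ℕ) (x : Fin n → Fin m) : Set (Fin n → Fin m) :=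
  {y | ∃ z : List (Fin m), z.length = n - 1 ∧ z.Sublist (List.ofFn x) ∧ z.Sublist (List.ofFn y)}

/-- `|L_1(x)|` : the size of the FLL ball of radius 1 around `x`. -/
noncomputable def L1size {m : ℕ} (n : ℕ) (x : Fin n → Fin m) : ℕ := (L1ball n x).ncard

/-- `f_n(y)` for binary words `y` of length `len` : `ρ(y)·n - (1/2)∑ s_j²`. -/
noncomputable def fB (n len : ℕ) (y : ℕ → Fin 2) : ℝ :=
  (rho len y : ℝ) * n - (sumLenSq len y : ℝ) / 2

/-- `f_{m,n}(y)` for words `y` of length `len` over `Z_m` :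
`ρ(y)(mn-n-1) - (1/2)∑ s_j² + (3/2)∑ s_j - a(y)`. -/
noncomputable def fM (m n len : ℕ) (y : ℕ → Fin m) : ℝ :=
  (rho len y : ℝ) * ((m : ℝ) * n - n - 1) - (sumLenSq len y : ℝ) / 2
    + 3 / 2 * (sumLen len y : ℝ) - (aCount len y : ℝ)


lemma altOn_mono {m : ℕ} {x : ℕ → Fin m} {a b c d : ℕ} (h : IsAltOn x a b) (h1 : a ≤ c)
    (h2 : d ≤ b) : IsAltOn x c d := by
  refine ⟨fun k hk => h.1 k ?_, fun k hk => h.2 k ?_⟩ <;> simp only [Finset.mem_Ico] at * <;> omega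

lemma altOn_union {m : ℕ} {x : ℕ → Fin m} {a b c d p q : ℕ} (h : IsAltOn x a b)
    (h' : IsAltOn x c d) (hap : a ≤ p) (hcp : c ≤ p) (hpq : p < q) (hqb : q ≤ b) (hqd : q ≤ d) :
    IsAltOn x (min a c) (max b d) := by
  constructor
  · intro k hk
    simp only [Finset.mem_Ico] at hk
    by_cases h1 : a ≤ k ∧ k < b
    · exact h.1 k (by simp only [Finset.mem_Ico]; omega)
    · exact h'.1 k (by simp only [Finset.mem_Ico]; omega)
  · intro k hk
    simp only [Finset.mem_Ico] at hk
    by_cases h1 : a ≤ k ∧ k < b - 1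
    · exact h.2 k (by simp only [Finset.mem_Ico]; omega)
    · exact h'.2 k (by simp only [Finset.mem_Ico]; omega)

lemma seg_unique {m : ℕ} {L : ℕ} {x : ℕ → Fin m} {P Q : ℕ × ℕ} (hP : P ∈ altSegs L x)
    (hQ : Q ∈ altSegs L x) {p q : ℕ} (hap : P.1 ≤ p) (hcp : Q.1 ≤ p) (hpq : p < q)
    (hqb : q ≤ P.2) (hqd : q ≤ Q.2) : P = Q := by
  obtain ⟨a, b⟩ := P
  obtain ⟨c, d⟩ := Q
  simp only [altSegs, mem_filter, mem_product, mem_range] at *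
  obtain ⟨⟨ha, hb⟩, hab, h1, h2, h3⟩ := hP
  obtain ⟨⟨hc, hd⟩, hcd, k1, k2, k3⟩ := hQ
  have hu := altOn_union h1 k1 hap hcp hpq hqb hqd
  have e1 : a ≤ c := by
    by_contra hlt
    rcases h2 with h2 | h2
    · omega
    · exact h2 (altOn_mono hu (by omega) (by omega))
  have e2 : c ≤ a := by
    by_contra hlt
    rcases k2 with h2 | h2
    · omega
    · exact h2 (altOn_mono hu (by omega) (by omega))
  have e3 : b ≤ d := by
    by_contra hlt
    rcases k3 with h2 | h2
    · omega
    · exact h2 (altOn_mono hu (by omega) (by omega))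
  have e4 : d ≤ b := by
    by_contra hlt
    rcases h3 with h2 | h2
    · omega
    · exact h2 (altOn_mono hu (by omega) (by omega))
  ext <;> simp <;> omega

lemma seg_exists {m : ℕ} {L : ℕ} {x : ℕ → Fin m} {p q : ℕ} (hpq : p ≤ q) (hq : q < L)
    (h : IsAltOn x p q) : ∃ P ∈ altSegs L x, P.1 ≤ p ∧ q ≤ P.2 := by
  let S := (Finset.range L ×ˢ Finset.range L).filter
    (fun P : ℕ × ℕ => P.1 ≤ p ∧ q ≤ P.2 ∧ IsAltOn x P.1 P.2)
  have hS : S.Nonempty := ⟨(p, q), by simp [S, h]; omega⟩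
  obtain ⟨⟨a, b⟩, hP, hmax⟩ := S.exists_max_image (fun P => P.2 - P.1) hS
  simp only [S, mem_filter, mem_product, mem_range] at hP hmax
  obtain ⟨⟨ha, hb⟩, h1, h2, h3⟩ := hP
  refine ⟨(a, b), ?_, h1, h2⟩
  simp only [altSegs, mem_filter, mem_product, mem_range]
  refine ⟨⟨ha, hb⟩, by omega, h3, ?_, ?_⟩
  · by_contra hc
    push Not at hc
    have := hmax (a - 1, b) ⟨⟨by simp; omega, hb⟩, by simp; omega, h2, hc.2⟩
    simp at this
    omega
  · by_contra hc
    push Not at hc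
    have := hmax (a, b + 1) ⟨⟨ha, by simp; omega⟩, h1, by simp; omega, hc.2⟩
    simp at this
    omega

/-- alternating factors of length at least three -/
def altPairs {m : ℕ} (L : ℕ) (x : ℕ → Fin m) : Finset (ℕ × ℕ) :=
  (Finset.range L ×ˢ Finset.range L).filter (fun p => p.1 + 2 ≤ p.2 ∧ IsAltOn x p.1 p.2)

lemma sub_count (a s : ℕ) : ((((Finset.range (a+s+1)) ×ˢ Finset.range (a+s+1)).filter
    (fun r : ℕ × ℕ => a ≤ r.1 ∧ r.1 + 2 ≤ r.2)).card : ℝ) = s * (s - 1) / 2 := by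
  induction s with
  | zero =>
    simp only [Nat.cast_zero, zero_mul, zero_div, Nat.cast_eq_zero, card_eq_zero]
    ext r; simp only [mem_filter, mem_product, mem_range]; simp; omega
  | succ s ih =>
    have : (((Finset.range (a+(s+1)+1)) ×ˢ Finset.range (a+(s+1)+1)).filter
        (fun r : ℕ × ℕ => a ≤ r.1 ∧ r.1 + 2 ≤ r.2)) =
        (((Finset.range (a+s+1)) ×ˢ Finset.range (a+s+1)).filter
        (fun r : ℕ × ℕ => a ≤ r.1 ∧ r.1 + 2 ≤ r.2)) ∪ (Finset.Ico a (a+s)) ×ˢ {a+s+1} := by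
      ext r
      simp only [mem_filter, mem_product, mem_range, mem_union, mem_Ico, mem_singleton]
      omega
    rw [this, card_union_of_disjoint, Nat.cast_add, ih]
    · simp; ring
    · rw [Finset.disjoint_left]
      intro r
      simp only [mem_filter, mem_product, mem_range, mem_Ico, mem_singleton]
      omega

lemma segs_sum {m : ℕ} (L : ℕ) (x : ℕ → Fin m) :
    -(sumLenSq L x : ℝ) / 2 + 3 / 2 * (sumLen L x : ℝ) - (aCount L x : ℝ)
      = - ((altPairs L x).card : ℝ) := by
  have hU : altPairs L x = (altSegs L x).biUnion (fun P =>
      ((Finset.range (P.2+1)) ×ˢ Finset.range (P.2+1)).filter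
        (fun r : ℕ × ℕ => P.1 ≤ r.1 ∧ r.1 + 2 ≤ r.2)) := by
    ext ⟨p, q⟩
    simp only [altPairs, mem_biUnion, mem_filter, mem_product, mem_range]
    constructor
    · rintro ⟨⟨hp, hq⟩, h1, h2⟩
      obtain ⟨P, hP, h3, h4⟩ := seg_exists (by omega) hq h2
      exact ⟨P, hP, by omega, by omega⟩
    · rintro ⟨P, hP, h3, h4⟩
      simp only [altSegs, mem_filter, mem_product, mem_range] at hP
      exact ⟨by omega, by omega, altOn_mono hP.2.2.1 (by omega) (by omega)⟩
  rw [hU, card_biUnion]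
  · simp only [sumLenSq, sumLen, aCount, card_eq_sum_ones, Nat.cast_sum]
    rw [neg_div, sum_div, mul_sum, ← sum_neg_distrib, ← sum_add_distrib, ← sum_sub_distrib,
      ← sum_neg_distrib]
    refine sum_congr rfl fun P hP => ?_
    simp only [altSegs, mem_filter, mem_product, mem_range] at hP
    obtain ⟨s, hs⟩ := Nat.exists_eq_add_of_le hP.2.1
    have := sub_count P.1 s
    rw [card_eq_sum_ones, Nat.cast_sum] at this
    rw [hs, this]
    simp
    ring
  · intro P hP Q hQ hne
    simp only [Function.onFun]
    rw [Finset.disjoint_left]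
    rintro ⟨p, q⟩ h1 h2
    simp only [mem_filter, mem_product, mem_range] at h1 h2
    exact hne (seg_unique hP hQ (p := p) (q := q) (by omega) (by omega) (by omega) (by omega)
      (by omega))

lemma altPairs_card {m : ℕ} (L : ℕ) (x : ℕ → Fin m) : ((altPairs L x).card : ℝ) =
    ∑ q ∈ range L, ∑ p ∈ range (q - 1), if IsAltOn x p q then (1:ℝ) else 0 := by
  rw [altPairs, card_eq_sum_ones, Nat.cast_sum, sum_filter, sum_product_right]
  refine sum_congr rfl fun q hq => ?_
  simp only [mem_range] at hq
  rw [← sum_subset (s₁ := range (q-1))]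
  · refine sum_congr rfl fun p hp => ?_
    simp only [mem_range] at hp
    have : p + 2 ≤ q := by omega
    simp [this]
  · intro p; simp only [mem_range]; omega
  · intro p _ hp
    simp only [mem_range] at hp
    have : ¬ (p + 2 ≤ q) := by omega
    simp [this]

lemma count_free {n m : ℕ} (P : (Fin n → Fin m) → Prop) [DecidablePred P]
    (g : (Fin n → Fin m) → Fin m) (j : Fin n)
    (hP : ∀ y c, P (Function.update y j c) ↔ P y)
    (hg : ∀ y c, g (Function.update y j c) = g y) :
    (univ.filter (fun y => P y ∧ y j = g y)).card * m = (univ.filter P).card := by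
  have : (univ.filter (fun y => P y ∧ y j = g y)).card * m =
      ((univ.filter (fun y => P y ∧ y j = g y)) ×ˢ (univ : Finset (Fin m))).card := by
    simp [card_product]
  rw [this]
  refine card_nbij' (fun r => Function.update r.1 j r.2)
    (fun y => (Function.update y j (g y), y j)) ?_ ?_ ?_ ?_
  · rintro ⟨y, c⟩ h
    simp at h ⊢
    exact (hP _ _).2 h.1
  · intro y h
    simp at h ⊢
    exact ⟨(hP _ _).2 h, (hg _ _).symm⟩
  · rintro ⟨y, c⟩ h
    simp at h ⊢
    rw [hg, ← h.2]
  · intro y h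
    simp

section
variable {m n i : ℕ} (h0 : 0 < m)

lemma word_update {j k : ℕ} (hj : j + i < n) (hk : k ≠ j) (y : Fin n → Fin m) (c : Fin m) :
    extWord n h0 (Function.update y ⟨j + i, hj⟩ c) (k + i) = extWord n h0 y (k + i) := by
  unfold extWord
  split_ifs with h
  · rw [Function.update_of_ne]
    simp [hk]
  · rfl

lemma word_at {j : ℕ} (hj : j + i < n) (y : Fin n → Fin m) :
    extWord n h0 y (j + i) = y ⟨j + i, hj⟩ := by
  simp [extWord, hj]

lemma altOn_succ {x : ℕ → Fin m} {a l : ℕ} : IsAltOn x a (a + (l + 2)) ↔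
    (IsAltOn x a (a + (l + 1)) ∧ x (a + l + 2) = x (a + l)) := by
  constructor
  · intro h
    refine ⟨altOn_mono h le_rfl (by omega), (h.2 (a + l) ?_).symm⟩
    simp only [mem_Ico]; omega
  · rintro ⟨h, e⟩
    constructor
    · intro k hk
      simp only [mem_Ico] at hk
      by_cases hk' : k = a + l + 1
      · subst hk'
        rw [show a + l + 1 + 1 = a + l + 2 from rfl, e]
        exact (h.1 (a + l) (by simp only [mem_Ico]; omega)).symm
      · exact h.1 k (by simp only [mem_Ico]; omega)
    · intro k hk
      simp only [mem_Ico] at hk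
      by_cases hk' : k = a + l
      · subst hk'; exact e.symm
      · exact h.2 k (by simp only [mem_Ico]; omega)

lemma altOn_congr {x z : ℕ → Fin m} {a b : ℕ} (h : ∀ k ≤ b, x k = z k) :
    IsAltOn x a b ↔ IsAltOn z a b := by
  unfold IsAltOn
  refine and_congr (forall₂_congr fun k hk => ?_) (forall₂_congr fun k hk => ?_) <;>
  · simp only [mem_Ico] at hk
    rw [h k (by omega), h _ (by omega)]

lemma altOn_one {x : ℕ → Fin m} {a : ℕ} : IsAltOn x a (a + 1) ↔ x a ≠ x (a + 1) := by
  simp [IsAltOn]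

lemma count_alt (a l : ℕ) (hl : a + (l + 1) + i < n) :
    ((univ.filter (fun y : Fin n → Fin m =>
      IsAltOn (fun k => extWord n h0 y (k + i)) a (a + (l + 1)))).card : ℝ) =
      ((m : ℝ) - 1) / (m : ℝ) ^ (l + 1) * (m : ℝ) ^ n := by
  have hm : (m : ℝ) ≠ 0 := by positivity
  induction l with
  | zero =>
    have h1 := count_free (n := n) (m := m) (fun _ => True)
      (fun y => extWord n h0 y (a + i)) ⟨a + 1 + i, hl⟩ (by simp)
      (fun y c => word_update h0 (j := a + 1) (k := a) hl (by omega) y c)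
    have h2 := card_filter_add_card_filter_not (s := (univ : Finset (Fin n → Fin m)))
      (fun y => y ⟨a + 1 + i, hl⟩ = extWord n h0 y (a + i))
    have h3 : univ.filter (fun y : Fin n → Fin m =>
      IsAltOn (fun k => extWord n h0 y (k + i)) a (a + (0 + 1))) =
      univ.filter (fun y => ¬ (y ⟨a + 1 + i, hl⟩ = extWord n h0 y (a + i))) := by
      ext y
      simp only [mem_filter, mem_univ, true_and, zero_add, altOn_one]
      rw [word_at h0 (j := a + 1) hl, ne_comm]
    rw [h3]
    simp only [true_and, filter_true] at h1
    simp only [card_univ, Fintype.card_fun, Fintype.card_fin] at h1 h2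
    have h1' := congrArg (Nat.cast (R := ℝ)) h1
    have h2' := congrArg (Nat.cast (R := ℝ)) h2
    push_cast at h1' h2'
    field_simp
    simp only [zero_add, pow_one]
    linear_combination (m : ℝ) * h2' - h1'
  | succ l ih =>
    have ih := ih (by omega)
    have hl' : a + l + 2 + i < n := by omega
    have h1 := count_free (n := n) (m := m)
      (fun y => IsAltOn (fun k => extWord n h0 y (k + i)) a (a + (l + 1)))
      (fun y => extWord n h0 y (a + l + i)) ⟨a + l + 2 + i, hl'⟩
      (fun y c => altOn_congr fun k hk => word_update h0 (j := a + l + 2) hl' (by omega) y c)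
      (fun y c => word_update h0 (j := a + l + 2) (k := a + l) hl' (by omega) y c)
    have h3 : univ.filter (fun y : Fin n → Fin m =>
      IsAltOn (fun k => extWord n h0 y (k + i)) a (a + (l + 1 + 1))) =
      univ.filter (fun y => IsAltOn (fun k => extWord n h0 y (k + i)) a (a + (l + 1)) ∧
        y ⟨a + l + 2 + i, hl'⟩ = extWord n h0 y (a + l + i)) := by
      ext y
      simp only [mem_filter, mem_univ, true_and]
      rw [altOn_succ, word_at h0 (j := a + l + 2) hl']
    rw [h3]
    have h1' := congrArg (Nat.cast (R := ℝ)) h1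
    push_cast at h1'
    rw [ih] at h1'
    rw [← mul_right_cancel_iff_of_pos (show (0:ℝ) < m by positivity), h1']
    field_simp
    ring
end

lemma innerGeom_sum (M : ℝ) (hM : M ≠ 0) (k : ℕ) :
    ∑ p ∈ range k, (M - 1) / M ^ (k + 1 - p) = 1 / M - 1 / M ^ (k + 1) := by
  induction k with
  | zero => simp
  | succ k ih =>
    rw [sum_range_succ']
    have : ∑ p ∈ range k, (M - 1) / M ^ (k + 1 + 1 - (p + 1)) =
        ∑ p ∈ range k, (M - 1) / M ^ (k + 1 - p) :=
      sum_congr rfl fun p _ => by rw [Nat.add_sub_add_right]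
    rw [this, ih]
    simp only [Nat.sub_zero]
    field_simp
    ring

lemma outer_sum (M : ℝ) (hM : M ≠ 0) (hM1 : M - 1 ≠ 0) (K : ℕ) :
    ∑ q ∈ range (K + 1), ∑ p ∈ range (q - 1), (M - 1) / M ^ (q - p) =
      K / M - 1 / (M - 1) + 1 / ((M - 1) * M ^ K) := by
  induction K with
  | zero => simp
  | succ k ih =>
    rw [sum_range_succ, ih, Nat.add_sub_cancel, innerGeom_sum M hM]
    push_cast
    field_simp
    ring

lemma rho_real {m : ℕ} (K : ℕ) (x : ℕ → Fin m) : (rho (K + 1) x : ℝ) =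
    1 + ∑ k ∈ range K, if IsAltOn x k (k + 1) then (1 : ℝ) else 0 := by
  simp only [rho, altOn_one, Nat.add_sub_cancel, card_eq_sum_ones, Nat.cast_sum, sum_filter,
    Nat.cast_add, Nat.cast_one]
  simp

theorem stmt19 (m n i : ℕ) (hm : 2 ≤ m) (hi : 1 ≤ i) (hin : i < n) :
    (∑ y : Fin n → Fin m,
        fM m n (n - i) (fun k => extWord n (by omega) y (k + i))) / (m : ℝ) ^ n
      = (n : ℝ) * ((n : ℝ) - i) * ((m : ℝ) + 1 / m - 2) - (n : ℝ) / m
          + 1 / ((m : ℝ) - 1) - 1 / (((m : ℝ) - 1) * (m : ℝ) ^ (n - i))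
          + (i : ℝ) - 1 / (m : ℝ) ^ (n - i) := by
  have h0 : 0 < m := by omega
  obtain ⟨K, hK⟩ : ∃ K, n - i = K + 1 := ⟨n - i - 1, by omega⟩
  have hn : (n : ℝ) = i + (K + 1) := by exact_mod_cast (by omega : n = i + (K + 1))
  have hM : (m : ℝ) ≠ 0 := by positivity
  have hM1 : (m : ℝ) - 1 ≠ 0 := by
    have : (2 : ℝ) ≤ m := by exact_mod_cast hm
    linarith
  have key : ∀ a b : ℕ, a < b → b ≤ K → ∑ y : Fin n → Fin m,
      (if IsAltOn (fun k => extWord n h0 y (k + i)) a b then (1 : ℝ) else 0) =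
      ((m : ℝ) - 1) / (m : ℝ) ^ (b - a) * (m : ℝ) ^ n := by
    intro a b hab hb
    obtain ⟨l, rfl⟩ : ∃ l, b = a + (l + 1) := ⟨b - a - 1, by omega⟩
    rw [Nat.add_sub_cancel_left, ← count_alt (i := i) h0 a l (by omega), sum_boole]
  have hf : ∀ y : Fin n → Fin m, fM m n (n - i) (fun k => extWord n h0 y (k + i)) =
      (1 + ∑ k ∈ range K, if IsAltOn (fun k => extWord n h0 y (k + i)) k (k + 1)
        then (1 : ℝ) else 0) * ((m : ℝ) * n - n - 1) -
      ∑ q ∈ range (K + 1), ∑ p ∈ range (q - 1),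
        if IsAltOn (fun k => extWord n h0 y (k + i)) p q then (1:ℝ) else 0 := by
    intro y
    rw [hK, ← altPairs_card, ← rho_real, fM]
    linear_combination segs_sum (K + 1) (fun k => extWord n h0 y (k + i))
  have e1 : ∑ y : Fin n → Fin m, ∑ k ∈ range K,
      (if IsAltOn (fun k => extWord n h0 y (k + i)) k (k + 1) then (1 : ℝ) else 0) =
      K * (((m : ℝ) - 1) / m) * (m : ℝ) ^ n := by
    rw [sum_comm, sum_congr rfl fun k hk => key k (k + 1) (by omega)
      (by simp only [mem_range] at hk; omega)]
    simp
    ring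
  have e2 : ∑ y : Fin n → Fin m, ∑ q ∈ range (K + 1), ∑ p ∈ range (q - 1),
      (if IsAltOn (fun k => extWord n h0 y (k + i)) p q then (1 : ℝ) else 0) =
      (K / (m : ℝ) - 1 / ((m : ℝ) - 1) + 1 / (((m : ℝ) - 1) * (m : ℝ) ^ K)) * (m : ℝ) ^ n := by
    rw [← outer_sum (m : ℝ) hM hM1, sum_comm, sum_mul]
    refine sum_congr rfl fun q hq => ?_
    rw [sum_comm, sum_mul]
    refine sum_congr rfl fun p hp => ?_
    simp only [mem_range] at hp hq
    exact key p q (by omega) (by omega)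
  rw [sum_congr rfl fun y _ => hf y, sum_sub_distrib, ← sum_mul, sum_add_distrib, e1, e2]
  simp only [sum_const, card_univ, Fintype.card_fun, Fintype.card_fin, nsmul_eq_mul, mul_one,
    Nat.cast_pow]
  have hMn : (m : ℝ) ^ n ≠ 0 := pow_ne_zero _ hM
  have hdiv : ∀ A B X : ℝ, X ≠ 0 →
      ((X + A * X) * ((m : ℝ) * n - n - 1) - B * X) / X =
      (1 + A) * ((m : ℝ) * n - n - 1) - B := by
    intro A B X hX
    field_simp
  rw [hdiv _ _ _ hMn, hK, hn]
  field_simp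
  ring
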